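/- Let A be a ring with an exact sequence of (A,A)-bimodules 0 → B_d → ... → B_0 → A → 0, where each B_j is a finite direct sum of bimodules of the form A ⊗_{A₀} A for subrings A₀ over which A is free as a left and as a right module. Let M be a left A-module such that for every subring A₀ occurring in the resolution, the projective dimension of M as an A₀-module is ≤ r. Then M has projective dimension ≤ d + r as an A-module. -/

import Mathlib

open CategoryTheory
open scoped TensorProduct DirectSum

/-- The `i`-th Ext group of two `A`-modules, as a `ℤ`-module. -/
noncomputable def extMod (A : Type) [Ring A] (i : ℕ) (M N : ModuleCat A) : ModuleCat ℤ :=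
  ((Ext ℤ (ModuleCat A) i).obj (Opposite.op M)).obj N

/-- `M` has projective dimension `≤ r` over `A`, expressed via vanishing of `Ext^i(M, -)`
for `i > r`. -/
def projDimLE (A : Type) [Ring A] (M : ModuleCat A) (r : ℕ) : Prop :=
  ∀ (N : ModuleCat A) (i : ℕ), r < i → Subsingleton (extMod A i M N)

/-- The enveloping ring `A ⊗_ℤ Aᵐᵒᵖ`; left modules over it are `(A,A)`-bimodules. -/
abbrev Env (A : Type) [Ring A] : Type := TensorProduct ℤ A Aᵐᵒᵖ

/-- `A` is a module over its enveloping ring (i.e. an `(A,A)`-bimodule). -/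
noncomputable instance envModuleSelf (A : Type) [Ring A] : Module (Env A) A :=
  TensorProduct.Algebra.module

/-- The left ideal of `Env A` generated by the elements `f r ⊗ 1 - 1 ⊗ (f r)ᵒᵖ`, so that
`Env A / envRel A A₀ f` is the bimodule `A ⊗_{A₀} A`. -/
def envRel (A : Type) [Ring A] (A₀ : Type) [Ring A₀] (f : A₀ →+* A) :
    Submodule (Env A) (Env A) :=
  Submodule.span (Env A)
    {x | ∃ r : A₀, x = (f r) ⊗ₜ[ℤ] (1 : Aᵐᵒᵖ) - (1 : A) ⊗ₜ[ℤ] (MulOpposite.op (f r))}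

/-- The `(A,A)`-bimodule `A ⊗_{A₀} A`, realized as a quotient of the enveloping ring. -/
abbrev TensorAA (A : Type) [Ring A] (A₀ : Type) [Ring A₀] (f : A₀ →+* A) : Type :=
  Env A ⧸ envRel A A₀ f

/-!
Let `K` be a bimodule with a finite resolution `B_• → K`, where `K` and all `B_j` are projective as
left modules. As left modules the resolution splits, so for every left module `N` the functor
`Hom_A(-, N)` turns it into a coresolution of `Hom_A(K, N)` by the left modules `Hom_A(B_j, N)`, and
dimension shifting shows that `Ext^i(M, Hom_A(K, N))` vanishes as soon as all
`Ext^k(M, Hom_A(B_j, N))` with `j + k = i` do. For `K = A` one has `Hom_A(A, N) ≅ N`, while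
`Hom_A(A ⊗_R A, N) ≅ Hom_R(A, N)` is coextended from `R`; if `A` is projective over `R`, its higher
`Ext` groups out of `M` are those of `N` out of `M` over `R`. Working with `Hom_A(-, N)` in place of
`- ⊗_A M` avoids tensor products of modules over a noncommutative ring.
-/

universe w w' v v' u u' u₁ u₂

theorem projective_of_isColimit_cofan {D : Type*} [Category* D] {ι : Type*} {X : ι → D}
    {c : Limits.Cofan X} (hc : Limits.IsColimit c) (h : ∀ t, Projective (X t)) :
    Projective c.pt where
  factors φ e _ := ⟨Limits.Cofan.IsColimit.desc hc fun t => Projective.factorThru (c.inj t ≫ φ) e,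
    Limits.Cofan.IsColimit.hom_ext hc _ _ fun t => by simp⟩

section HomExact

variable {C : Type u} [Category.{v} C]

/-- Exactness of `Hom(K, Y)` in degree `i + 1`: every `(i + 1)`-cocycle is a coboundary. For a
projective resolution `K` of `X` this is the vanishing of `Ext^(i + 1)(X, Y)`. -/
def HomExactAtSucc [Limits.HasZeroMorphisms C] (K : ChainComplex C ℕ) (Y : C) (i : ℕ) : Prop :=
  ∀ φ : K.X (i + 1) ⟶ Y, K.d (i + 2) (i + 1) ≫ φ = 0 → ∃ ψ : K.X i ⟶ Y, K.d (i + 1) i ≫ ψ = φ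

theorem homExactAtSucc_of_isLimit_fan [Limits.HasZeroMorphisms C] {ι : Type w}
    {K : ChainComplex C ℕ} {Z : ι → C} {c : Limits.Fan Z} (hc : Limits.IsLimit c) {i : ℕ}
    (h : ∀ t, HomExactAtSucc K (Z t) i) : HomExactAtSucc K c.pt i := by
  intro φ hφ
  choose ψ hψ using fun t => h t (φ ≫ c.proj t) (by rw [← Category.assoc, hφ, Limits.zero_comp])
  exact ⟨Limits.Fan.IsLimit.lift hc ψ, Limits.Fan.IsLimit.hom_ext hc _ _ fun t => by simp [hψ]⟩

theorem homExactAtSucc_of_adjunction [Preadditive C] {D : Type u'} [Category.{v'} D]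
    [Preadditive D] {F : C ⥤ D} {G : D ⥤ C} [F.Additive] (adj : F ⊣ G)
    {K : ChainComplex C ℕ} {Y : D} {i : ℕ}
    (h : HomExactAtSucc ((F.mapHomologicalComplex _).obj K) Y i) :
    HomExactAtSucc K (G.obj Y) i := by
  intro φ hφ
  have hφ' : F.map (K.d (i + 2) (i + 1)) ≫ (adj.homEquiv _ _).symm φ = 0 := by
    rw [← adj.homEquiv_naturality_left_symm, hφ, ← adj.homAddEquiv_symm_apply, map_zero]
  obtain ⟨ψ, hψ⟩ : ∃ ψ : F.obj (K.X i) ⟶ Y,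
      F.map (K.d (i + 1) i) ≫ ψ = (adj.homEquiv _ _).symm φ := h _ hφ'
  refine ⟨adj.homEquiv _ _ ψ, ?_⟩
  rw [← adj.homEquiv_naturality_left, hψ, Equiv.apply_symm_apply]

end HomExact

section ExtVanishing

variable {C : Type u} [Category.{v} C] [Abelian C]

theorem subsingleton_ext_succ_iff_homExactAtSucc [HasExt.{w} C] {X : C}
    (P : ProjectiveResolution X) (Y : C) (i : ℕ) :
    Subsingleton (Abelian.Ext X Y (i + 1)) ↔ HomExactAtSucc P.complex Y i := by
  constructor
  · intro h φ hφ
    exact (P.extMk_eq_zero_iff φ (i + 2) rfl hφ i rfl).1 (Subsingleton.elim _ _)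
  · refine fun h => subsingleton_of_forall_eq 0 fun α => ?_
    obtain ⟨φ, hφ, rfl⟩ := P.extMk_surjective α (i + 2) rfl
    exact (P.extMk_eq_zero_iff φ (i + 2) rfl hφ i rfl).2 (h φ hφ)

theorem subsingleton_ext_succ_of_adjunction [HasExt.{w} C] [EnoughProjectives C] {D : Type u'}
    [Category.{v'} D] [Abelian D] [HasExt.{w'} D] {F : C ⥤ D} {G : D ⥤ C} [F.Additive]
    [F.PreservesHomology] [F.PreservesProjectiveObjects] (adj : F ⊣ G) {X : C} {Y : D} {i : ℕ}
    (h : Subsingleton (Abelian.Ext (F.obj X) Y (i + 1))) :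
    Subsingleton (Abelian.Ext X (G.obj Y) (i + 1)) := by
  let P := ProjectiveResolution.of X
  rw [subsingleton_ext_succ_iff_homExactAtSucc (F.mapProjectiveResolution P)] at h
  exact (subsingleton_ext_succ_iff_homExactAtSucc P _ i).2 (homExactAtSucc_of_adjunction adj h)

theorem subsingleton_ext_succ_of_isLimit_fan [HasExt.{w} C] [EnoughProjectives C] {ι : Type w'}
    {X : C} {Z : ι → C} {c : Limits.Fan Z} (hc : Limits.IsLimit c) {i : ℕ}
    (h : ∀ t, Subsingleton (Abelian.Ext X (Z t) (i + 1))) :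
    Subsingleton (Abelian.Ext X c.pt (i + 1)) := by
  let P := ProjectiveResolution.of X
  simp only [subsingleton_ext_succ_iff_homExactAtSucc P] at h ⊢
  exact homExactAtSucc_of_isLimit_fan hc h

theorem subsingleton_ext_of_iso [HasExt.{w} C] (X : C) {Y Z : C} (e : Y ≅ Z) {i : ℕ}
    (h : Subsingleton (Abelian.Ext X Y i)) : Subsingleton (Abelian.Ext X Z i) :=
  ((Abelian.extFunctorObj X i).mapIso e).addCommGroupIsoToAddEquiv.toEquiv.subsingleton_congr.1 h

theorem subsingleton_ext_of_isZero [HasExt.{w} C] (X : C) {Y : C} (hY : Limits.IsZero Y) (i : ℕ) :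
    Subsingleton (Abelian.Ext X Y i) :=
  AddCommGrpCat.subsingleton_of_isZero ((Abelian.extFunctorObj X i).map_isZero hY)

theorem subsingleton_ext_zero_of_shortExact [HasExt.{w} C] (X : C) {S : ShortComplex C}
    (hS : S.ShortExact) (h₂ : Subsingleton (Abelian.Ext X S.X₂ 0)) :
    Subsingleton (Abelian.Ext X S.X₁ 0) :=
  have := hS.mono_f
  ⟨fun _ _ => Abelian.Ext.postcomp_mk₀_injective_of_mono X S.f (h₂.elim _ _)⟩

theorem subsingleton_ext_succ_of_shortExact [HasExt.{w} C] (X : C) {S : ShortComplex C}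
    (hS : S.ShortExact) {i : ℕ} (h₃ : Subsingleton (Abelian.Ext X S.X₃ i))
    (h₂ : Subsingleton (Abelian.Ext X S.X₂ (i + 1))) :
    Subsingleton (Abelian.Ext X S.X₁ (i + 1)) := by
  refine subsingleton_of_forall_eq 0 fun α => ?_
  obtain ⟨β, rfl⟩ := Abelian.Ext.covariant_sequence_exact₁ X hS α (Subsingleton.elim _ _) rfl
  rw [Subsingleton.elim β 0, Abelian.Ext.zero_comp]

end ExtVanishing

theorem subsingleton_extMod_succ_iff_homExactAtSucc {A : Type} [Ring A] {M : ModuleCat A}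
    (P : ProjectiveResolution M) (N : ModuleCat A) (i : ℕ) :
    Subsingleton (extMod A (i + 1) M N) ↔ HomExactAtSucc P.complex N i := by
  rw [← ModuleCat.isZero_iff_subsingleton, extMod, (P.isoExt (i + 1) N).isZero_iff,
    ← HomologicalComplex.exactAt_iff_isZero_homology,
    HomologicalComplex.exactAt_iff' _ i (i + 1) (i + 2) (by simp) (by simp),
    ShortComplex.moduleCat_exact_iff]
  rfl

theorem projDimLE_iff_hasProjectiveDimensionLE {A : Type} [Ring A] {M : ModuleCat A} {r : ℕ} :
    projDimLE A M r ↔ HasProjectiveDimensionLE M r := by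
  have key (N : ModuleCat A) : ∀ i, r < i →
      (Subsingleton (extMod A i M N) ↔ Subsingleton (Abelian.Ext M N i))
    | 0, hi => absurd hi (Nat.not_lt_zero r)
    | i + 1, _ => by
      rw [subsingleton_extMod_succ_iff_homExactAtSucc (.of M),
        subsingleton_ext_succ_iff_homExactAtSucc (.of M)]
  refine ⟨fun h => (hasProjectiveDimensionLT_iff _ _).2 fun i hi N e => ?_, fun h N i hi => ?_⟩
  · have := (key N i hi).1 (h N i hi)
    exact Subsingleton.elim _ _
  · exact (key N i hi).2 (HasProjectiveDimensionLT.subsingleton M (r + 1) i hi N)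

section RestrictScalars

variable {R : Type u₁} {S : Type u₂} [Ring R] [Ring S] (f : R →+* S)

instance restrictScalars_preservesHomology :
    (ModuleCat.restrictScalars.{v} f).PreservesHomology :=
  Functor.preservesHomology_of_map_exact _ fun T hT => by
    rw [ShortComplex.moduleCat_exact_iff] at hT ⊢
    exact hT

theorem coextendScalars_preservesEpimorphisms
    [Module.Projective R ((ModuleCat.restrictScalars f).obj (ModuleCat.of S S))] :
    (ModuleCat.coextendScalars.{u₁, u₂, v} f).PreservesEpimorphisms where
  preserves {X Y} g hg := by
    rw [ModuleCat.epi_iff_surjective] at hg ⊢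
    intro h
    obtain ⟨k, hk⟩ := Module.projective_lifting_property g.hom
      (ModuleCat.CoextendScalars.equiv f Y h) hg
    refine ⟨(ModuleCat.CoextendScalars.equiv f X).symm k, ModuleCat.CoextendScalars.ext ?_⟩
    exact hk

theorem restrictScalars_preservesProjectiveObjects
    [Module.Projective R ((ModuleCat.restrictScalars f).obj (ModuleCat.of S S))] :
    (ModuleCat.restrictScalars.{max v u₂} f).PreservesProjectiveObjects :=
  have := coextendScalars_preservesEpimorphisms.{max v u₂} f
  Functor.preservesProjectiveObjects_of_adjunction_of_preservesEpimorphisms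
    (ModuleCat.restrictCoextendScalarsAdj.{v} f)

end RestrictScalars

theorem subsingleton_ext_succ_coextendScalars {R S : Type u} [Ring R] [Ring S] (f : R →+* S)
    [Module.Projective R ((ModuleCat.restrictScalars f).obj (ModuleCat.of S S))]
    {M : ModuleCat.{u} S} {N : ModuleCat.{u} R} {i : ℕ}
    (h : Subsingleton (Abelian.Ext ((ModuleCat.restrictScalars f).obj M) N (i + 1))) :
    Subsingleton (Abelian.Ext M ((ModuleCat.coextendScalars f).obj N) (i + 1)) :=
  have := restrictScalars_preservesProjectiveObjects.{u} f
  subsingleton_ext_succ_of_adjunction (ModuleCat.restrictCoextendScalarsAdj.{u} f) h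

section Bimodules

open MulOpposite

variable {A : Type} [Ring A]

variable (A) in
/-- The left `A`-module underlying an `(A, A)`-bimodule. -/
noncomputable abbrev leftModule : ModuleCat (Env A) ⥤ ModuleCat A :=
  ModuleCat.restrictScalars Algebra.TensorProduct.includeLeftRingHom

/-- The right action of `A` on an `(A, A)`-bimodule, by endomorphisms of the underlying left
module. -/
noncomputable def rightMul (B : ModuleCat (Env A)) : A →+* (End ((leftModule A).obj B))ᵐᵒᵖ where
  toFun a := op <| ModuleCat.ofHom (X := (leftModule A).obj B) (Y := (leftModule A).obj B)
    { toFun b := ((1 : A) ⊗ₜ[ℤ] op a : Env A) • (b : B)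
      map_add' := smul_add (A := B) _
      map_smul' c b := by
        change (_ : Env A) • (_ : Env A) • (b : B) = (_ : Env A) • (_ : Env A) • (b : B)
        simp [smul_smul] }
  map_one' := unop_injective <| ModuleCat.hom_ext <| LinearMap.ext fun b => one_smul (Env A) (b : B)
  map_mul' x y := unop_injective <| ModuleCat.hom_ext <| LinearMap.ext fun b => by
    change (_ : Env A) • (b : B) = (_ : Env A) • (_ : Env A) • (b : B)
    simp [smul_smul]
  map_zero' := unop_injective <| ModuleCat.hom_ext <| LinearMap.ext fun b => by
    change (_ : Env A) • (b : B) = 0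
    rw [MulOpposite.op_zero, TensorProduct.tmul_zero]
    exact zero_smul (Env A) (b : B)
  map_add' x y := unop_injective <| ModuleCat.hom_ext <| LinearMap.ext fun b => by
    change (_ : Env A) • (b : B) = (_ : Env A) • (b : B) + (_ : Env A) • (b : B)
    rw [MulOpposite.op_add, TensorProduct.tmul_add, add_smul]

theorem map_comp_unop_rightMul {B C : ModuleCat (Env A)} (g : B ⟶ C) (a : A) :
    (leftModule A).map g ≫ (rightMul C a).unop = (rightMul B a).unop ≫ (leftModule A).map g := by
  ext b
  exact (map_smul g.hom ((1 : A) ⊗ₜ[ℤ] op a : Env A) (b : B)).symm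

/-- The left `A`-module `Hom_A(B, N)` of left-linear maps from a bimodule `B` to a left module
`N`, where `A` acts through the right multiplication on `B`. -/
noncomputable def homModule (B : ModuleCat (Env A)) (N : ModuleCat A) : ModuleCat A :=
  letI := Module.compHom ((leftModule A).obj B ⟶ N) (rightMul B)
  .of A ((leftModule A).obj B ⟶ N)

variable (N : ModuleCat A)

/-- Precomposition with bimodule maps makes `homModule B N` functorial in `B`. -/
noncomputable def homFunctor : (ModuleCat (Env A))ᵒᵖ ⥤ ModuleCat A where
  obj B := homModule B.unop N
  map {B C} g := ModuleCat.ofHom (X := homModule B.unop N) (Y := homModule C.unop N)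
    { toFun (φ : (leftModule A).obj B.unop ⟶ N) := (leftModule A).map g.unop ≫ φ
      map_add' _ _ := Preadditive.comp_add _ _ _ _ _ _
      map_smul' a (φ : (leftModule A).obj B.unop ⟶ N) :=
        (Category.assoc _ _ _).symm.trans <|
          (congrArg (· ≫ φ) (map_comp_unop_rightMul g.unop a)).trans (Category.assoc _ _ _) }

instance : (homFunctor N).Additive where
  map_add {B C g h} := by
    ext (φ : (leftModule A).obj B.unop ⟶ N)
    exact Preadditive.add_comp _ _ _ ((leftModule A).map g.unop) ((leftModule A).map h.unop) φ

theorem nonempty_splitting_leftModule {S : ShortComplex (ModuleCat (Env A))} (hS : S.ShortExact)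
    [Projective ((leftModule A).obj S.X₃)] : Nonempty (S.map (leftModule A)).Splitting := by
  have : Projective (S.map (leftModule A)).X₃ := ‹_›
  have := hS.mono_f
  have := hS.epi_g
  exact ⟨(hS.map (leftModule A)).splittingOfProjective⟩

theorem shortExact_homFunctor {S : ShortComplex (ModuleCat (Env A))}
    (σ : (S.map (leftModule A)).Splitting) : (S.op.map (homFunctor N)).ShortExact :=
  ShortExact.reflects_shortExact_of_faithful (forget₂ (ModuleCat A) AddCommGrpCat)
    (σ.op.map (preadditiveYoneda.obj N)).shortExact

instance preservesLimits_homFunctor : Limits.PreservesLimits (homFunctor N) :=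
  have : Limits.PreservesLimits (homFunctor N ⋙ forget (ModuleCat A)) :=
    Limits.comp_preservesLimits (leftModule A).op (yoneda.obj N)
  Limits.preservesLimits_of_reflects_of_preserves _ (forget (ModuleCat A))

variable {N}

theorem projective_leftModule_of_isColimit_cofan {ι : Type} {X : ι → ModuleCat (Env A)}
    {c : Limits.Cofan X} (hc : Limits.IsColimit c)
    (h : ∀ t, Projective ((leftModule A).obj (X t))) : Projective ((leftModule A).obj c.pt) :=
  projective_of_isColimit_cofan
    (Limits.isColimitCofanMkObjOfIsColimit (leftModule A) _ _
      (Limits.IsColimit.ofIsoColimit hc (Limits.Cofan.ext (Iso.refl _)))) h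

theorem subsingleton_ext_homModule_of_isColimit_cofan {ι : Type} {X : ι → ModuleCat (Env A)}
    {c : Limits.Cofan X} (hc : Limits.IsColimit c) {M : ModuleCat A} {i : ℕ}
    (h : ∀ t, Subsingleton (Abelian.Ext M (homModule (X t) N) (i + 1))) :
    Subsingleton (Abelian.Ext M (homModule c.pt N) (i + 1)) :=
  subsingleton_ext_succ_of_isLimit_fan
    (Limits.isLimitFanMkObjOfIsLimit (homFunctor N) _ _ (Limits.Cofan.IsColimit.op hc)) h

section TensorBimodule

variable {R : Type} [Ring R] (f : R →+* A)

/-- The bimodule `A ⊗_R A`, bundled. -/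
abbrev tensorBimodule : ModuleCat (Env A) := .of (Env A) (TensorAA A R f)

theorem mk_mul_tmul_eq_mk_tmul_mul (r : R) (x : Env A) :
    (Submodule.Quotient.mk (x * (f r ⊗ₜ 1)) : TensorAA A R f) =
      Submodule.Quotient.mk (x * (1 ⊗ₜ op (f r))) := by
  rw [Submodule.Quotient.eq, ← mul_sub]
  exact Submodule.smul_mem _ _ (Submodule.subset_span ⟨r, rfl⟩)

/-- The map `b ↦ 1 ⊗ b`. -/
noncomputable def oneTmul :
    (ModuleCat.restrictScalars f).obj (.of A A) ⟶
      (ModuleCat.restrictScalars f).obj ((leftModule A).obj (tensorBimodule f)) :=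
  ModuleCat.ofHom (X := (ModuleCat.restrictScalars f).obj (.of A A))
    (Y := (ModuleCat.restrictScalars f).obj ((leftModule A).obj (tensorBimodule f)))
  { toFun (b : A) := (Submodule.Quotient.mk ((1 : A) ⊗ₜ op b) : TensorAA A R f)
    map_add' (b c : A) := by
      change (Submodule.Quotient.mk ((1 : A) ⊗ₜ op (b + c)) : TensorAA A R f) = _
      rw [MulOpposite.op_add, TensorProduct.tmul_add]
      rfl
    map_smul' r (b : A) := by
      have := mk_mul_tmul_eq_mk_tmul_mul f r (1 ⊗ₜ op b)
      simp only [Algebra.TensorProduct.tmul_mul_tmul, one_mul, mul_one, ← op_mul] at this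
      change _ = (_ : Env A) • (Submodule.Quotient.mk ((1 : A) ⊗ₜ op b) : TensorAA A R f)
      rw [← Submodule.Quotient.mk_smul]
      refine this.symm.trans ?_
      simp }

/-- The left-linear extension `a ⊗ b ↦ a • g b` of an additive map `g` to the enveloping ring. -/
noncomputable def envLift (g : A →+ N) : Env A →ₗ[A] N :=
  TensorProduct.AlgebraTensorModule.lift <| LinearMap.toSpanSingleton A (Aᵐᵒᵖ →ₗ[ℤ] N)
    (g.comp opAddEquiv.symm.toAddMonoidHom).toIntLinearMap

theorem envLift_tmul (g : A →+ N) (a : A) (b : Aᵐᵒᵖ) : envLift g (a ⊗ₜ b) = a • g b.unop := rfl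

theorem envLift_eq_zero_of_mem_envRel {g : A →+ N} (hg : ∀ r b, g (f r * b) = f r • g b)
    {x : Env A} (hx : x ∈ envRel A R f) : envLift g x = 0 := by
  refine Submodule.closure_induction (map_zero _)
    (fun x y _ _ hx hy => by rw [map_add, hx, hy, add_zero]) ?_ hx
  rintro y _ ⟨r, rfl⟩
  induction y using TensorProduct.induction_on with
  | zero => simp
  | add x y hx hy => rw [add_smul, map_add, hx, hy, add_zero]
  | tmul a b => simp [mul_sub, envLift_tmul, hg, mul_smul]

theorem smul_eq_tmul_one_mul (a : A) (x : Env A) : a • x = (a ⊗ₜ 1) * x := by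
  rw [← mul_one a, ← smul_eq_mul, ← TensorProduct.smul_tmul', smul_mul_assoc,
    ← Algebra.TensorProduct.one_def, one_mul, smul_eq_mul, mul_one]

/-- The left-linear map `A ⊗_R A ⟶ N` induced by an `R`-linear map `A ⟶ N`. -/
noncomputable def tensorLift
    (g : (ModuleCat.restrictScalars f).obj (.of A A) ⟶ (ModuleCat.restrictScalars f).obj N) :
    (leftModule A).obj (tensorBimodule f) ⟶ N :=
  ModuleCat.ofHom (X := (leftModule A).obj (tensorBimodule f))
  { QuotientAddGroup.lift (envRel A R f).toAddSubgroup
      (envLift (N := N) g.hom.toAddMonoidHom).toAddMonoidHom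
      fun x hx => envLift_eq_zero_of_mem_envRel f (fun r b => g.hom.map_smul r b) hx with
    map_smul' a x := by
      obtain ⟨x, rfl⟩ := Submodule.Quotient.mk_surjective _ x
      refine Eq.trans ?_ (map_smul (envLift (N := N) g.hom.toAddMonoidHom) a x)
      refine congrArg (envLift (N := N) g.hom.toAddMonoidHom) (?_ : (a ⊗ₜ 1) * x = a • x)
      exact (smul_eq_tmul_one_mul a x).symm }

theorem leftModule_tensorBimodule_hom_ext {φ ψ : (leftModule A).obj (tensorBimodule f) ⟶ N}
    (h : oneTmul f ≫ (ModuleCat.restrictScalars f).map φ =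
      oneTmul f ≫ (ModuleCat.restrictScalars f).map ψ) : φ = ψ := by
  ext x
  obtain ⟨x, rfl⟩ := Submodule.Quotient.mk_surjective _ x
  induction x using TensorProduct.induction_on with
  | zero => exact (map_zero φ.hom).trans (map_zero ψ.hom).symm
  | add x y hx hy =>
    exact (map_add φ.hom _ _).trans ((congrArg₂ _ hx hy).trans (map_add ψ.hom _ _).symm)
  | tmul a b =>
    have hab : (Submodule.Quotient.mk (a ⊗ₜ b) : (leftModule A).obj (tensorBimodule f)) =
        a • oneTmul f b.unop := by
      change Submodule.Quotient.mk _ = Submodule.Quotient.mk ((a ⊗ₜ 1) * (1 ⊗ₜ b) : Env A)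
      rw [Algebra.TensorProduct.tmul_mul_tmul, mul_one, one_mul]
    refine (congrArg φ hab).trans <| ((map_smul φ.hom a _).trans ?_).trans
      (congrArg ψ hab).symm
    refine Eq.trans ?_ (map_smul ψ.hom a _).symm
    exact congrArg (a • ·) (ConcreteCategory.congr_hom h b.unop)

/-- The universal property of `A ⊗_R A` as a left module. -/
noncomputable def tensorBimoduleHomEquiv : ((leftModule A).obj (tensorBimodule f) ⟶ N) ≃+
    ((ModuleCat.restrictScalars f).obj (.of A A) ⟶ (ModuleCat.restrictScalars f).obj N) where
  toFun φ := oneTmul f ≫ (ModuleCat.restrictScalars f).map φ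
  invFun := tensorLift f
  left_inv φ := leftModule_tensorBimodule_hom_ext f <| by
    ext b
    exact one_smul A _
  right_inv g := by
    ext b
    exact one_smul A _
  map_add' φ ψ := rfl

theorem projective_leftModule_tensorBimodule
    [Module.Projective R ((ModuleCat.restrictScalars f).obj (.of A A))] :
    Projective ((leftModule A).obj (tensorBimodule f)) where
  factors φ e _ := by
    have : Projective ((ModuleCat.restrictScalars f).obj (.of A A)) :=
      ModuleCat.projective_of_categoryTheory_projective _
    let g := Projective.factorThru (tensorBimoduleHomEquiv f φ)
      ((ModuleCat.restrictScalars f).map e)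
    refine ⟨(tensorBimoduleHomEquiv f).symm g, leftModule_tensorBimodule_hom_ext f ?_⟩
    have hg : tensorBimoduleHomEquiv f ((tensorBimoduleHomEquiv f).symm g) = g :=
      AddEquiv.apply_symm_apply _ _
    rw [Functor.map_comp]
    exact (congrArg (· ≫ (ModuleCat.restrictScalars f).map e) hg).trans
      (Projective.factorThru_comp _ _)

/-- `Hom_A(A ⊗_R A, N)` is the coextension of scalars `Hom_R(A, N)`. -/
noncomputable def homModuleTensorBimoduleIso : homModule (tensorBimodule f) N ≅
    (ModuleCat.coextendScalars f).obj ((ModuleCat.restrictScalars f).obj N) :=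
  let e : homModule (tensorBimodule f) N ≃+
      (ModuleCat.coextendScalars f).obj ((ModuleCat.restrictScalars f).obj N) :=
    ((tensorBimoduleHomEquiv f).trans ModuleCat.homAddEquiv).trans
      (ModuleCat.CoextendScalars.equiv f _).symm.toAddEquiv
  (e.toLinearEquiv fun a (φ : (leftModule A).obj (tensorBimodule f) ⟶ N) => by
    refine ModuleCat.CoextendScalars.ext <| LinearMap.ext fun (b : A) => ?_
    change φ (Submodule.Quotient.mk ((1 ⊗ₜ op a) * (1 ⊗ₜ op b))) =
      φ (Submodule.Quotient.mk (1 ⊗ₜ op (b * a)))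
    rw [Algebra.TensorProduct.tmul_mul_tmul, one_mul, op_mul]).toModuleIso

end TensorBimodule

/-- The left `A`-module underlying the bimodule `A`. -/
noncomputable def leftModuleSelfIso : (leftModule A).obj (.of (Env A) A) ≅ .of A A :=
  let e : (leftModule A).obj (.of (Env A) A) ≃+ A := AddEquiv.refl A
  (e.toLinearEquiv fun a (b : A) => by
    change a • (1 : Aᵐᵒᵖ) • b = a * b
    rw [one_smul, smul_eq_mul]).toModuleIso

theorem projective_leftModule_self : Projective ((leftModule A).obj (.of (Env A) A)) :=
  .of_iso leftModuleSelfIso.symm (ModuleCat.projective_of_categoryTheory_projective _)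

variable (N) in
/-- Evaluation at `1` identifies `Hom_A(A, N)` with `N`. -/
noncomputable def homModuleSelfIso : homModule (.of (Env A) A) N ≅ N :=
  let e : homModule (.of (Env A) A) N ≃+ N :=
    { toFun (φ : (leftModule A).obj (.of (Env A) A) ⟶ N) := φ (1 : A)
      invFun y := leftModuleSelfIso.hom ≫ ModuleCat.ofHom (LinearMap.toSpanSingleton A N y)
      left_inv (φ : (leftModule A).obj (.of (Env A) A) ⟶ N) := by
        refine (cancel_epi leftModuleSelfIso.inv).1 <| ModuleCat.hom_ext <| LinearMap.ext_ring ?_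
        exact one_smul A _
      right_inv y := one_smul A y
      map_add' _ _ := rfl }
  (e.toLinearEquiv fun a (φ : (leftModule A).obj (.of (Env A) A) ⟶ N) => by
    change φ ((1 : A) • op a • (1 : A)) = a • φ (1 : A)
    refine Eq.trans (congrArg φ ?_) (φ.hom.map_smul a _)
    change (1 : A) • op a • (1 : A) = a • (1 : Aᵐᵒᵖ) • (1 : A)
    simp).toModuleIso

theorem subsingleton_ext_homModule_of_exact {M : ModuleCat A} {i : ℕ}
    {B : ℕ → ModuleCat (Env A)} {K : ModuleCat (Env A)} {δ : ∀ j, B (j + 1) ⟶ B j} {ε : B 0 ⟶ K}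
    (hε : Function.Surjective ε) (hδε : Function.Exact (δ 0) ε)
    (hδ : ∀ j, Function.Exact (δ (j + 1)) (δ j))
    (hB : ∀ j, Projective ((leftModule A).obj (B j))) (hK : Projective ((leftModule A).obj K))
    (hExt : ∀ j k, j + k = i → Subsingleton (Abelian.Ext M (homModule (B j) N) k)) :
    Subsingleton (Abelian.Ext M (homModule K N) i) := by
  induction i generalizing B K with
  | zero =>
    obtain ⟨σ⟩ := nonempty_splitting_leftModule (LinearMap.shortExact_shortComplexKer hε)
    exact subsingleton_ext_zero_of_shortExact M (shortExact_homFunctor N σ) (hExt 0 0 rfl)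
  | succ i ih =>
    have hS := LinearMap.shortExact_shortComplexKer hε
    obtain ⟨σ⟩ := nonempty_splitting_leftModule hS
    let ε' : B 1 ⟶ .of (Env A) ε.hom.ker :=
      ModuleCat.ofHom ((δ 0).hom.codRestrict _ fun x => (hδε _).2 ⟨x, rfl⟩)
    have hε' : Function.Surjective ε' := by
      rintro ⟨x, hx⟩
      obtain ⟨y, rfl⟩ := (hδε x).1 hx
      exact ⟨y, rfl⟩
    have hδε' : Function.Exact (δ 1) ε' := fun x => by
      rw [← hδ 0 x]
      exact Subtype.ext_iff
    have hker : Projective ((leftModule A).obj (.of (Env A) ε.hom.ker)) :=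
      have hr : Retract ((leftModule A).obj (.of (Env A) ε.hom.ker)) ((leftModule A).obj (B 0)) :=
        ⟨_, σ.r, σ.f_r⟩
      hr.projective
    refine subsingleton_ext_succ_of_shortExact M (shortExact_homFunctor N σ) ?_
      (hExt 0 (i + 1) (zero_add _))
    exact ih hε' hδε' (fun j => hδ (j + 1)) (fun j => hB (j + 1)) hker
      fun j k hjk => hExt (j + 1) k (by omega)

section DirectSum

variable {ι : Type} {R : ι → Type} [∀ t, Ring (R t)] {f : ∀ t, R t →+* A}
  [∀ t, Module.Projective (R t) ((ModuleCat.restrictScalars (f t)).obj (.of A A))]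
  {B : Type} [AddCommGroup B] [Module (Env A) B]

theorem projective_leftModule_of_linearEquiv_directSum
    (e : B ≃ₗ[Env A] ⨁ t, TensorAA A (R t) (f t)) :
    Projective ((leftModule A).obj (.of (Env A) B)) := by
  classical
  exact .of_iso ((leftModule A).mapIso e.toModuleIso).symm <|
    projective_leftModule_of_isColimit_cofan
      (ModuleCat.coproductCoconeIsColimit fun t => tensorBimodule (f t))
      fun t => projective_leftModule_tensorBimodule (f t)

theorem subsingleton_ext_homModule_of_linearEquiv_directSum
    (e : B ≃ₗ[Env A] ⨁ t, TensorAA A (R t) (f t)) {M : ModuleCat A} {i : ℕ}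
    (h : ∀ t, Subsingleton (Abelian.Ext ((ModuleCat.restrictScalars (f t)).obj M)
      ((ModuleCat.restrictScalars (f t)).obj N) (i + 1))) :
    Subsingleton (Abelian.Ext M (homModule (.of (Env A) B) N) (i + 1)) := by
  classical
  exact subsingleton_ext_of_iso M ((homFunctor N).mapIso e.toModuleIso.op) <|
    subsingleton_ext_homModule_of_isColimit_cofan
      (ModuleCat.coproductCoconeIsColimit fun t => tensorBimodule (f t)) fun t =>
        subsingleton_ext_of_iso M (homModuleTensorBimoduleIso (f t)).symm <|
          subsingleton_ext_succ_coextendScalars (f t) (h t)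

end DirectSum

end Bimodules

theorem stmt3_general (A : Type) [Ring A] (d e : ℕ)
    (B : ℕ → Type) [∀ j, AddCommGroup (B j)] [∀ j, Module (Env A) (B j)]
    (ι : ℕ → Type) (R : ∀ j : ℕ, ι j → Type) [∀ j t, Ring (R j t)]
    (f : ∀ j t, R j t →+* A)
    (hproj : ∀ j, j ≤ d → ∀ t, Module.Projective (R j t)
      ((ModuleCat.restrictScalars (f j t)).obj (ModuleCat.of A A)))
    (hiso : ∀ j, j ≤ d → Nonempty (B j ≃ₗ[Env A] ⨁ t : ι j, TensorAA A (R j t) (f j t)))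
    (htriv : ∀ j, d < j → Subsingleton (B j))
    (δ : ∀ j : ℕ, B (j + 1) →ₗ[Env A] B j) (ε : B 0 →ₗ[Env A] A)
    (hsurj : Function.Surjective ε)
    (hexact0 : Function.Exact (δ 0) ε)
    (hexact : ∀ j : ℕ, Function.Exact (δ (j + 1)) (δ j))
    (M : ModuleCat A) (s : ℕ → ℕ)
    (hM : ∀ j, j ≤ d → ∀ t, projDimLE (R j t)
      ((ModuleCat.restrictScalars (f j t)).obj M) (s j))
    (hs : ∀ j, j ≤ d → j + s j ≤ e) :
    projDimLE A M e := by
  simp only [projDimLE_iff_hasProjectiveDimensionLE] at hM ⊢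
  refine (hasProjectiveDimensionLT_iff _ _).2 fun i hi N α => ?_
  have hzero (j : ℕ) (hj : d < j) : Limits.IsZero (ModuleCat.of (Env A) (B j)) :=
    ModuleCat.isZero_of_iff_subsingleton.2 (htriv j hj)
  have hB (j : ℕ) : Projective ((leftModule A).obj (.of (Env A) (B j))) := by
    rcases le_or_gt j d with hj | hj
    · have := hproj j hj
      exact (hiso j hj).elim projective_leftModule_of_linearEquiv_directSum
    · exact ((leftModule A).map_isZero (hzero j hj)).projective
  have hExt (j k : ℕ) (hjk : j + k = i) :
      Subsingleton (Abelian.Ext M (homModule (.of (Env A) (B j)) N) k) := by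
    rcases le_or_gt j d with hj | hj
    · have hsj : j + s j ≤ e := hs j hj
      obtain ⟨k, rfl⟩ : ∃ l, k = l + 1 := ⟨k - 1, by omega⟩
      have := hproj j hj
      obtain ⟨φ⟩ := hiso j hj
      exact subsingleton_ext_homModule_of_linearEquiv_directSum φ fun t =>
        have := hM j hj t
        HasProjectiveDimensionLT.subsingleton _ (s j + 1) _ (by omega) _
    · exact subsingleton_ext_of_isZero M ((homFunctor N).map_isZero (hzero j hj).op) k
  have : Subsingleton (Abelian.Ext M (homModule (.of (Env A) A) N) i) :=
    subsingleton_ext_homModule_of_exact (δ := fun j => ModuleCat.ofHom (δ j))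
      (ε := ModuleCat.ofHom ε) hsurj hexact0 hexact hB projective_leftModule_self hExt
  have := subsingleton_ext_of_iso M (homModuleSelfIso N) this
  exact Subsingleton.elim _ _

/-- given an exact sequence of `(A,A)`-bimodules
`0 → B_d → ... → B_0 → A → 0` in which each `B_j` is a finite direct sum of bimodules
`A ⊗_{A₀} A` for subrings `A₀` over which `A` is free as a left and as a right module,
any left `A`-module `M` whose projective dimension over each occurring `A₀` is `≤ r`
has projective dimension `≤ d + r` over `A`. -/
theorem stmt3 (A : Type) [Ring A] (d r : ℕ)
    (B : ℕ → Type) [∀ j, AddCommGroup (B j)] [∀ j, Module (Env A) (B j)]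
    (n : ℕ → ℕ) (R : ∀ j : ℕ, Fin (n j) → Type) [∀ j t, Ring (R j t)]
    (f : ∀ j t, R j t →+* A)
    (hinj : ∀ j t, Function.Injective (f j t))
    (hfreeL : ∀ j t, Module.Free (R j t)
      ((ModuleCat.restrictScalars (f j t)).obj (ModuleCat.of A A)))
    (hfreeR : ∀ j t, Module.Free (R j t)ᵐᵒᵖ
      ((ModuleCat.restrictScalars (RingHom.op (f j t))).obj (ModuleCat.of Aᵐᵒᵖ Aᵐᵒᵖ)))
    (hiso : ∀ j, j ≤ d →
      Nonempty (B j ≃ₗ[Env A] ⨁ t : Fin (n j), TensorAA A (R j t) (f j t)))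
    (htriv : ∀ j, d < j → Subsingleton (B j))
    (δ : ∀ j : ℕ, B (j + 1) →ₗ[Env A] B j) (ε : B 0 →ₗ[Env A] A)
    (hsurj : Function.Surjective ε)
    (hexact0 : Function.Exact (δ 0) ε)
    (hexact : ∀ j : ℕ, Function.Exact (δ (j + 1)) (δ j))
    (M : ModuleCat A)
    (hM : ∀ j, j ≤ d → ∀ t, projDimLE (R j t)
      ((ModuleCat.restrictScalars (f j t)).obj M) r) :
    projDimLE A M (d + r) :=
  stmt3_general A d (d + r) B (fun j => Fin (n j)) R f
    (fun j _ t => have := hfreeL j t; inferInstance) hiso htriv δ ε hsurj hexact0 hexact M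
    (fun _ => r) hM (by omega)
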